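/- For every architecture A, finite alphabet Σ, and every CPDS S over (A,Σ), there exists an EMSO(A,Σ) sentence Φ_S such that L(Φ_S) = L(S). -/

import Mathlib

/-! ### Architectures and concurrent behaviors with matching (CBMs) -/

/-- The three kinds of data structures. -/
inductive DSKind : Type
  | stack
  | queue
  | bag
deriving DecidableEq

/-- An architecture: a finite set of processes, a finite set of data structures
(each a stack, queue, or bag), with writer and reader processes; stacks are
written and read by the same process. -/
structure Architecture where
  Procs : Type
  DS : Type
  procsFintype : Fintype Procs
  dsFintype : Fintype DS
  procsDecEq : DecidableEq Procs
  dsDecEq : DecidableEq DS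
  kind : DS → DSKind
  Writer : DS → Procs
  Reader : DS → Procs
  stack_wr : ∀ d, kind d = DSKind.stack → Writer d = Reader d

attribute [instance] Architecture.procsFintype Architecture.dsFintype
  Architecture.procsDecEq Architecture.dsDecEq

/-- Potential events: a process together with a (1-based) position. -/
abbrev Architecture.Event (A : Architecture) : Type := A.Procs × ℕ

/-- The data of a CBM: one word per process and one matching relation per
data structure (on potential events). -/
structure PreCBM (A : Architecture) (Alph : Type) where
  word : A.Procs → List Alph
  mrel : A.DS → A.Event → A.Event → Prop

namespace PreCBM

variable {A : Architecture} {Alph : Type}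

/-- `(p,i)` is an event iff `1 ≤ i ≤ |w_p|`. -/
def isEvent (M : PreCBM A Alph) (e : A.Event) : Prop :=
  1 ≤ e.2 ∧ e.2 ≤ (M.word e.1).length

/-- The set of events of `M`. -/
def events (M : PreCBM A Alph) : Set A.Event := {e | M.isEvent e}

/-- The label of event `(p,i)` is the `i`-th letter of `w_p`. -/
def label (M : PreCBM A Alph) (e : A.Event) : Option Alph :=
  (M.word e.1)[e.2 - 1]?

/-- Process-successor relation `(p,i) → (p,i+1)`. -/
def procSucc (M : PreCBM A Alph) (e f : A.Event) : Prop :=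
  M.isEvent e ∧ M.isEvent f ∧ f.1 = e.1 ∧ f.2 = e.2 + 1

/-- `e ▷ f` for some data structure. -/
def mat (M : PreCBM A Alph) (e f : A.Event) : Prop := ∃ d, M.mrel d e f

def step (M : PreCBM A Alph) (e f : A.Event) : Prop := M.procSucc e f ∨ M.mat e f

/-- The causal order `< = (→ ∪ ▷)⁺`. -/
def lt (M : PreCBM A Alph) : A.Event → A.Event → Prop := Relation.TransGen M.step

/-- An event is internal if it is not the endpoint of any matching edge. -/
def isInternal (M : PreCBM A Alph) (e : A.Event) : Prop :=
  ¬ ∃ d f, M.mrel d e f ∨ M.mrel d f e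

/-- The CBM axioms. -/
structure IsCBM (M : PreCBM A Alph) : Prop where
  mrel_valid : ∀ d e f, M.mrel d e f →
    M.isEvent e ∧ M.isEvent f ∧ e.1 = A.Writer d ∧ f.1 = A.Reader d
  disjoint : ∀ d d' e f e' f', M.mrel d e f → M.mrel d' e' f' →
    ¬ (d = d' ∧ e = e' ∧ f = f') → e ≠ e' ∧ e ≠ f' ∧ f ≠ e' ∧ f ≠ f'
  irrefl : ∀ e, ¬ M.lt e e
  lifo : ∀ d, A.kind d = DSKind.stack → ∀ e₁ f₁ e₂ f₂,
    M.mrel d e₁ f₁ → M.mrel d e₂ f₂ → M.lt e₁ e₂ → M.lt e₂ f₁ → M.lt f₂ f₁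
  fifo : ∀ d, A.kind d = DSKind.queue → ∀ e₁ f₁ e₂ f₂,
    M.mrel d e₁ f₁ → M.mrel d e₂ f₂ → M.lt e₁ e₂ → M.lt f₁ f₂

end PreCBM

/-- Concurrent behaviors with matching over `(A, Alph)`. -/
def CBM (A : Architecture) (Alph : Type) : Type := {M : PreCBM A Alph // M.IsCBM}
/-! ### Systems of concurrent processes with data structures (CPDS) -/

/-- A CPDS over an architecture `A` and alphabet `Alph`. -/
structure CPDS (A : Architecture) (Alph : Type) where
  Locs : Type
  Val : Type
  locsFintype : Fintype Locs
  valFintype : Fintype Val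
  locsNonempty : Nonempty Locs
  valNonempty : Nonempty Val
  internal : A.Procs → Locs → Alph → Locs → Prop
  write : A.Procs → Locs → Alph → A.DS → Val → Locs → Prop
  read : A.Procs → Locs → Alph → A.DS → Val → Locs → Prop
  write_writer : ∀ p ℓ a d v ℓ', write p ℓ a d v ℓ' → A.Writer d = p
  read_reader : ∀ p ℓ a d v ℓ', read p ℓ a d v ℓ' → A.Reader d = p
  init : Locs
  finals : Set (A.Procs → Locs)

namespace CPDS

variable {A : Architecture} {Alph : Type}

/-- `ρ⁻(e)`: location before event `e` (`init` if `e` is minimal on its process). -/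
def prevLoc (S : CPDS A Alph) (ρ : A.Event → S.Locs) (e : A.Event) : S.Locs :=
  if e.2 ≤ 1 then S.init else ρ (e.1, e.2 - 1)

/-- `ρ` is a run of `S` on `M` (graph semantics). -/
def IsRun (S : CPDS A Alph) (M : PreCBM A Alph) (ρ : A.Event → S.Locs) : Prop :=
  (∀ e, M.isEvent e → M.isInternal e →
    ∃ a, M.label e = some a ∧ S.internal e.1 (S.prevLoc ρ e) a (ρ e)) ∧
  (∀ d e f, M.mrel d e f → ∃ v a b,
    M.label e = some a ∧ M.label f = some b ∧
    S.write e.1 (S.prevLoc ρ e) a d v (ρ e) ∧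
    S.read f.1 (S.prevLoc ρ f) b d v (ρ f))

/-- Location of the last event of process `p` (`init` if it has no event). -/
def lastLoc (S : CPDS A Alph) (M : PreCBM A Alph) (ρ : A.Event → S.Locs)
    (p : A.Procs) : S.Locs :=
  if (M.word p).length = 0 then S.init else ρ (p, (M.word p).length)

/-- `S` accepts `M`: some run reaching a global final location tuple. -/
def AcceptsPre (S : CPDS A Alph) (M : PreCBM A Alph) : Prop :=
  ∃ ρ : A.Event → S.Locs, S.IsRun M ρ ∧ (fun p => S.lastLoc M ρ p) ∈ S.finals

/-- The graph-semantics language `L(S) ⊆ CBM(A,Alph)`. -/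
def lang (S : CPDS A Alph) : Set (CBM A Alph) := {M | S.AcceptsPre M.1}

end CPDS
/-! ### Monadic second-order logic over vertex- and edge-labeled structures -/

/-- MSO formulas over structures with vertex labels `Vl` and binary relations
indexed by `El`.  First-order variables and set variables are indexed by `ℕ`. -/
inductive GMSO (Vl El : Type) : Type
  | lab (a : Vl) (x : ℕ)
  | edge (γ : El) (x y : ℕ)
  | eq (x y : ℕ)
  | mem (x X : ℕ)
  | or (φ ψ : GMSO Vl El)
  | not (φ : GMSO Vl El)
  | exFO (x : ℕ) (φ : GMSO Vl El)
  | exSO (X : ℕ) (φ : GMSO Vl El)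

namespace GMSO

variable {Vl El : Type} {V : Type}

/-- Satisfaction of an MSO formula in a structure with domain `dom`, labeling
relation `lab` and edge relations `edge`, under valuations `ν` (first-order,
partial) and `μ` (second-order). -/
def Sat (dom : Set V) (lab : V → Vl → Prop) (edge : El → V → V → Prop) :
    (ℕ → Option V) → (ℕ → Set V) → GMSO Vl El → Prop
  | ν, _, .lab a x => ∃ v, ν x = some v ∧ v ∈ dom ∧ lab v a
  | ν, _, .edge γ x y => ∃ u v, ν x = some u ∧ ν y = some v ∧ edge γ u v
  | ν, _, .eq x y => ∃ v, ν x = some v ∧ ν y = some v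
  | ν, μ, .mem x X => ∃ v, ν x = some v ∧ v ∈ μ X
  | ν, μ, .or φ ψ => Sat dom lab edge ν μ φ ∨ Sat dom lab edge ν μ ψ
  | ν, μ, .not φ => ¬ Sat dom lab edge ν μ φ
  | ν, μ, .exFO x φ => ∃ v ∈ dom, Sat dom lab edge (Function.update ν x (some v)) μ φ
  | ν, μ, .exSO X φ => ∃ E : Set V, E ⊆ dom ∧ Sat dom lab edge ν (Function.update μ X E) φ

/-- Free first-order variables. -/
def freeFO : GMSO Vl El → Set ℕ
  | .lab _ x => {x}
  | .edge _ x y => {x, y}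
  | .eq x y => {x, y}
  | .mem x _ => {x}
  | .or φ ψ => freeFO φ ∪ freeFO ψ
  | .not φ => freeFO φ
  | .exFO x φ => freeFO φ \ {x}
  | .exSO _ φ => freeFO φ

/-- Free second-order variables. -/
def freeSO : GMSO Vl El → Set ℕ
  | .lab _ _ => ∅
  | .edge _ _ _ => ∅
  | .eq _ _ => ∅
  | .mem _ X => {X}
  | .or φ ψ => freeSO φ ∪ freeSO ψ
  | .not φ => freeSO φ
  | .exFO _ φ => freeSO φ
  | .exSO X φ => freeSO φ \ {X}

/-- A sentence is a formula without free variables. -/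
def Closed (φ : GMSO Vl El) : Prop := freeFO φ = ∅ ∧ freeSO φ = ∅

/-- Satisfaction of a sentence (valuations are irrelevant for sentences). -/
def Models (dom : Set V) (lab : V → Vl → Prop) (edge : El → V → V → Prop)
    (φ : GMSO Vl El) : Prop :=
  Sat dom lab edge (fun _ => none) (fun _ => ∅) φ

/-- First-order formulas: no second-order quantification. -/
def FirstOrder : GMSO Vl El → Prop
  | .or φ ψ => FirstOrder φ ∧ FirstOrder ψ
  | .not φ => FirstOrder φ
  | .exFO _ φ => FirstOrder φ
  | .exSO _ _ => False
  | _ => True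

/-- EMSO formulas: a block of existential second-order quantifiers followed by a
first-order formula. -/
inductive IsEMSO : GMSO Vl El → Prop
  | fo {φ : GMSO Vl El} : FirstOrder φ → IsEMSO φ
  | ex {X : ℕ} {φ : GMSO Vl El} : IsEMSO φ → IsEMSO (.exSO X φ)

end GMSO
/-! ### MSO over CBMs -/

namespace PreCBM

variable {A : Architecture} {Alph : Type}

/-- Vertex-label relation of a CBM: `a(x)` (letter) and `p(x)` (process). -/
def gmsoLab (M : PreCBM A Alph) (e : A.Event) : Alph ⊕ A.Procs → Prop := fun q =>
  match q with
  | Sum.inl a => M.label e = some a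
  | Sum.inr p => e.1 = p

/-- Edge relations of a CBM: `x → y` (`none`) and `x ▷^d y` (`some d`). -/
def gmsoEdge (M : PreCBM A Alph) : Option A.DS → A.Event → A.Event → Prop := fun γ e f =>
  match γ with
  | none => M.procSucc e f
  | some d => M.mrel d e f

/-- Satisfaction of an `MSO(A,Alph)` sentence in the CBM `M`. -/
def MsoSat (M : PreCBM A Alph) (φ : GMSO (Alph ⊕ A.Procs) (Option A.DS)) : Prop :=
  GMSO.Models M.events M.gmsoLab M.gmsoEdge φ

end PreCBM

/-- `L(φ) = {M ∈ CBM(A,Alph) | M ⊨ φ}`. -/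
def msoLang (A : Architecture) (Alph : Type)
    (φ : GMSO (Alph ⊕ A.Procs) (Option A.DS)) : Set (CBM A Alph) :=
  {M | M.1.MsoSat φ}

/-!
A run is a colouring of the events by the finitely many locations. Such a colouring is encoded by a
tuple of sets `X`: the colour of an event `e` is read off the finite set `{j | e ∈ X j}`.
Everything a run condition asks about an event (its process, its letter, its location and the
location before it) takes values in a finite set, and each single value is first-order definable
from `X`; hence so is every condition on these values, however the transition relations are given.
Quantifying the sets `X` existentially gives the EMSO sentence.
-/

namespace GMSO

/-- A structure in which `GMSO` formulas are interpreted: the universe `dom`, the vertex labels and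
the binary relations, bundled so that definability can be stated over a family of structures. -/
structure LabeledGraph (Vl El V : Type) where
  dom : Set V
  lab : V → Vl → Prop
  edge : El → V → V → Prop

section Valuations

variable {V : Type} {n k : ℕ}

theorem update_extend_finVal {α : Type*} (v : Fin n → α) (g : ℕ → α) (a : α) :
    Function.update (Function.extend Fin.val v g) n a =
      Function.extend Fin.val (Fin.snoc v a : Fin (n + 1) → α) g := by
  funext i
  rcases lt_trichotomy i n with hi | rfl | hi
  · rw [Function.update_of_ne hi.ne, Fin.val_injective.extend_apply v g ⟨i, hi⟩]
    have := Fin.val_injective.extend_apply (Fin.snoc v a : Fin (n + 1) → α) g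
      (Fin.castSucc ⟨i, hi⟩)
    rw [Fin.snoc_castSucc] at this
    exact this.symm
  · have := Fin.val_injective.extend_apply (Fin.snoc v a : Fin (i + 1) → α) g (Fin.last i)
    rw [Fin.snoc_last] at this
    rw [Function.update_self]
    exact this.symm
  · rw [Function.update_of_ne hi.ne', Function.extend_apply' _ _ _ (by rintro ⟨j, rfl⟩; omega),
      Function.extend_apply' _ _ _ (by rintro ⟨j, rfl⟩; omega)]

/-- The first-order valuation sending the variable `j < n` to `v j`; the variables from `n` on
are undefined. -/
noncomputable def pointVal (v : Fin n → V) : ℕ → Option V :=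
  Function.extend Fin.val (some ∘ v) fun _ => none

/-- The second-order valuation sending the set variable `j < k` to `X j`; the variables from `k` on
are sent to `∅`, their value in `GMSO.Models`. -/
noncomputable def setVal (X : Fin k → Set V) : ℕ → Set V :=
  Function.extend Fin.val X fun _ => ∅

@[simp]
theorem pointVal_apply (v : Fin n → V) (j : Fin n) : pointVal v j = some (v j) :=
  Fin.val_injective.extend_apply _ _ j

@[simp]
theorem setVal_apply (X : Fin k → Set V) (j : Fin k) : setVal X j = X j :=
  Fin.val_injective.extend_apply _ _ j

theorem update_pointVal (v : Fin n → V) (a : V) :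
    Function.update (pointVal v) n (some a) = pointVal (Fin.snoc v a : Fin (n + 1) → V) := by
  rw [pointVal, update_extend_finVal, pointVal, Fin.comp_snoc]

theorem update_setVal (X : Fin k → Set V) (E : Set V) :
    Function.update (setVal X) k E = setVal (Fin.snoc X E : Fin (k + 1) → Set V) :=
  update_extend_finVal X _ E

theorem pointVal_zero (v : Fin 0 → V) : pointVal v = fun _ => none :=
  Function.extend_of_isEmpty _ _ _

theorem setVal_zero (X : Fin 0 → Set V) : setVal X = fun _ => ∅ :=
  Function.extend_of_isEmpty _ _ _

end Valuations

section Definability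

variable {Vl El V : Type} {ι : Type*} {k n : ℕ} {G : ι → LabeledGraph Vl El V}

/-- `P` is uniformly first-order definable over the family `G`: one first-order formula, with free
variables among the first `n` points and the first `k` sets, expresses `P` in every `G i`, for all
tuples of points of `G i`. -/
def FODefinable (G : ι → LabeledGraph Vl El V)
    (P : ι → (Fin k → Set V) → (Fin n → V) → Prop) : Prop :=
  ∃ φ : GMSO Vl El, φ.FirstOrder ∧ φ.freeFO ⊆ Set.Iio n ∧ φ.freeSO ⊆ Set.Iio k ∧
    ∀ i X v, (∀ j, v j ∈ (G i).dom) →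
      (Sat (G i).dom (G i).lab (G i).edge (pointVal v) (setVal X) φ ↔ P i X v)

/-- All fibres of the map `f` are first-order definable. This is meant for maps with finitely many
values, for which it yields the definability of every property of the value. -/
def FODefinableMap {C : Type*} (G : ι → LabeledGraph Vl El V)
    (f : ι → (Fin k → Set V) → (Fin n → V) → C) : Prop :=
  ∀ c, FODefinable G fun i X v => f i X v = c

namespace FODefinable

variable {P Q : ι → (Fin k → Set V) → (Fin n → V) → Prop}

theorem congr (hP : FODefinable G P)
    (h : ∀ i X v, (∀ j, v j ∈ (G i).dom) → (P i X v ↔ Q i X v)) : FODefinable G Q := by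
  obtain ⟨φ, hfo, hpt, hset, hsat⟩ := hP
  exact ⟨φ, hfo, hpt, hset, fun i X v hv => (hsat i X v hv).trans (h i X v hv)⟩

theorem lab (a : Vl) (j : Fin n) :
    FODefinable (k := k) G fun i _ v => (G i).lab (v j) a := by
  refine ⟨.lab a j, trivial, by simp [freeFO], by simp [freeSO], fun i X v hv => ?_⟩
  simp [Sat, hv j]

theorem edge (γ : El) (j₁ j₂ : Fin n) :
    FODefinable (k := k) G fun i _ v => (G i).edge γ (v j₁) (v j₂) := by
  refine ⟨.edge γ j₁ j₂, trivial, by simp [freeFO, Set.insert_subset_iff], by simp [freeSO],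
    fun i X v _ => ?_⟩
  simp [Sat]

theorem mem (j : Fin n) (l : Fin k) : FODefinable G fun _ X v => v j ∈ X l := by
  refine ⟨.mem j l, trivial, by simp [freeFO], by simp [freeSO], fun i X v _ => ?_⟩
  simp [Sat]

theorem not (hP : FODefinable G P) : FODefinable G fun i X v => ¬ P i X v := by
  obtain ⟨φ, hfo, hpt, hset, hsat⟩ := hP
  exact ⟨.not φ, hfo, hpt, hset, fun i X v hv => not_congr (hsat i X v hv)⟩

theorem or (hP : FODefinable G P) (hQ : FODefinable G Q) :
    FODefinable G fun i X v => P i X v ∨ Q i X v := by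
  obtain ⟨φ, hfo, hpt, hset, hsat⟩ := hP
  obtain ⟨ψ, hfo', hpt', hset', hsat'⟩ := hQ
  exact ⟨.or φ ψ, ⟨hfo, hfo'⟩, Set.union_subset hpt hpt', Set.union_subset hset hset',
    fun i X v hv => or_congr (hsat i X v hv) (hsat' i X v hv)⟩

theorem exists_mem {P : ι → (Fin k → Set V) → (Fin n → V) → V → Prop}
    (hP : FODefinable G fun i X (v : Fin (n + 1) → V) =>
      P i X (fun j => v j.castSucc) (v (Fin.last n))) :
    FODefinable G fun i X v => ∃ a ∈ (G i).dom, P i X v a := by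
  obtain ⟨φ, hfo, hpt, hset, hsat⟩ := hP
  refine ⟨.exFO n φ, hfo, fun j hj => ?_, hset, fun i X v hv => ?_⟩
  · exact lt_of_le_of_ne (Nat.lt_succ_iff.1 (hpt hj.1)) hj.2
  · refine exists_congr fun a => and_congr_right fun ha => ?_
    have hva : ∀ j, (Fin.snoc v a : Fin (n + 1) → V) j ∈ (G i).dom :=
      Fin.lastCases (by simpa using ha) (by simpa using hv)
    rw [update_pointVal, hsat i X _ hva]
    simp

theorem false : FODefinable (k := k) (n := n) G fun _ _ _ => False := by
  refine ⟨.exFO n (.not (.eq n n)), trivial, by simp [freeFO], by simp [freeSO], fun i X v _ => ?_⟩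
  simp [Sat]

theorem const (p : Prop) : FODefinable (k := k) (n := n) G fun _ _ _ => p := by
  by_cases hp : p
  · simpa [hp] using (false (G := G) (k := k) (n := n)).not
  · simpa [hp] using false (G := G) (k := k) (n := n)

theorem and (hP : FODefinable G P) (hQ : FODefinable G Q) :
    FODefinable G fun i X v => P i X v ∧ Q i X v :=
  (hP.not.or hQ.not).not.congr fun _ _ _ _ => by tauto

theorem imp (hP : FODefinable G P) (hQ : FODefinable G Q) :
    FODefinable G fun i X v => P i X v → Q i X v :=
  (hP.not.or hQ).congr fun _ _ _ _ => imp_iff_not_or.symm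

theorem forall_mem {P : ι → (Fin k → Set V) → (Fin n → V) → V → Prop}
    (hP : FODefinable G fun i X (v : Fin (n + 1) → V) =>
      P i X (fun j => v j.castSucc) (v (Fin.last n))) :
    FODefinable G fun i X v => ∀ a ∈ (G i).dom, P i X v a :=
  (exists_mem (P := fun i X v a => ¬ P i X v a) hP.not).not.congr fun _ _ _ _ => by simp

theorem exists_finite {κ : Type*} [Finite κ] {P : κ → ι → (Fin k → Set V) → (Fin n → V) → Prop}
    (hP : ∀ c, FODefinable G (P c)) : FODefinable G fun i X v => ∃ c, P c i X v := by
  classical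
  cases nonempty_fintype κ
  suffices ∀ s : Finset κ, FODefinable G fun i X v => ∃ c ∈ s, P c i X v by
    simpa using this Finset.univ
  intro s
  induction s using Finset.induction_on with
  | empty => simpa using false
  | insert c s _ ih => simpa using (hP c).or ih

theorem forall_finite {κ : Type*} [Finite κ] {P : κ → ι → (Fin k → Set V) → (Fin n → V) → Prop}
    (hP : ∀ c, FODefinable G (P c)) : FODefinable G fun i X v => ∀ c, P c i X v :=
  (exists_finite fun c => (hP c).not).not.congr fun _ _ _ _ => not_exists_not

theorem iff_const (hP : FODefinable G P) (p : Prop) : FODefinable G fun i X v => (P i X v ↔ p) := by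
  by_cases hp : p
  · simpa [hp] using hP
  · simpa [hp] using hP.not

end FODefinable

namespace FODefinableMap

variable {C D : Type*} {f : ι → (Fin k → Set V) → (Fin n → V) → C}

theorem pred [Finite C] (hf : FODefinableMap G f) (p : C → Prop) :
    FODefinable G fun i X v => p (f i X v) :=
  (FODefinable.exists_finite fun c => (FODefinable.const (p c)).and (hf c)).congr
    fun _ _ _ _ => by simp

theorem comp [Finite C] (hf : FODefinableMap G f) (g : C → D) :
    FODefinableMap G fun i X v => g (f i X v) :=
  fun d => hf.pred fun c => g c = d

theorem prodMk {g : ι → (Fin k → Set V) → (Fin n → V) → D} (hf : FODefinableMap G f)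
    (hg : FODefinableMap G g) : FODefinableMap G fun i X v => (f i X v, g i X v) :=
  fun c => ((hf c.1).and (hg c.2)).congr fun _ _ _ _ => by simp [Prod.ext_iff]

theorem pi {κ : Type*} [Finite κ] {f : κ → ι → (Fin k → Set V) → (Fin n → V) → C}
    (hf : ∀ a, FODefinableMap G (f a)) : FODefinableMap G fun i X v a => f a i X v :=
  fun c => (FODefinable.forall_finite fun a => hf a (c a)).congr fun _ _ _ _ => funext_iff.symm

theorem option [Finite C] {f : ι → (Fin k → Set V) → (Fin n → V) → Option C}
    (hf : ∀ c, FODefinable G fun i X v => f i X v = some c) : FODefinableMap G f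
  | some c => hf c
  | none => (FODefinable.forall_finite fun c => (hf c).not).congr fun _ _ _ _ =>
      Option.eq_none_iff_forall_ne_some.symm

end FODefinableMap

end Definability

section Coloring

variable {V C : Type} {k : ℕ}

/-- The colouring of points encoded by the sets `X`: the colour of `a` is the value under `dec` of
the set of indices `j` with `a ∈ X j`. Since `dec` is total, any `X` encodes some colouring, and no
formula has to require that the sets form a partition. -/
def coloring (dec : Set (Fin k) → C) (X : Fin k → Set V) (a : V) : C :=
  dec {j | a ∈ X j}

theorem exists_surjective_set_fin (C : Type*) [Finite C] [Nonempty C] :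
    ∃ k : ℕ, ∃ dec : Set (Fin k) → C, Function.Surjective dec := by
  obtain ⟨k, ⟨enum⟩⟩ := Finite.exists_equiv_fin C
  exact ⟨k, Function.invFun fun c => {enum c},
    Function.invFun_surjective (Set.singleton_injective.comp enum.injective)⟩

theorem exists_coloring_eqOn {dec : Set (Fin k) → C} (hdec : Function.Surjective dec)
    (s : Set V) (ρ : V → C) :
    ∃ X : Fin k → Set V, (∀ j, X j ⊆ s) ∧ Set.EqOn (coloring dec X) ρ s := by
  choose code hcode using hdec
  refine ⟨fun j => {a ∈ s | j ∈ code (ρ a)}, fun j => Set.sep_subset _ _, fun a ha => ?_⟩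
  simpa [coloring, ha] using hcode (ρ a)

theorem FODefinableMap.coloring {Vl El : Type} {ι : Type*} {n : ℕ} {G : ι → LabeledGraph Vl El V}
    (dec : Set (Fin k) → C) (j : Fin n) :
    FODefinableMap G fun _ X v => coloring dec X (v j) :=
  have indices : FODefinableMap G fun _ X v => {l | v j ∈ X l} := fun T =>
    (FODefinable.forall_finite fun l => (FODefinable.mem j l).iff_const (l ∈ T)).congr
      fun _ _ _ _ => Set.ext_iff.symm
  indices.comp dec

end Coloring

section Sentences

variable {Vl El V : Type} {ι : Type*} {k : ℕ}

theorem IsEMSO.exists_sentence {φ : GMSO Vl El} (hemso : φ.IsEMSO) (hpt : φ.freeFO = ∅)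
    (hset : φ.freeSO ⊆ Set.Iio k) :
    ∃ ψ : GMSO Vl El, ψ.Closed ∧ ψ.IsEMSO ∧ ∀ G : LabeledGraph Vl El V,
      Models G.dom G.lab G.edge ψ ↔ ∃ X : Fin k → Set V, (∀ j, X j ⊆ G.dom) ∧
        Sat G.dom G.lab G.edge (fun _ => none) (setVal X) φ := by
  induction k generalizing φ with
  | zero =>
    refine ⟨φ, ⟨hpt, Set.subset_empty_iff.1 (by simpa using hset)⟩, hemso, fun G => ?_⟩
    simp [Models, setVal_zero]
  | succ k ih =>
    have hset' : (exSO k φ).freeSO ⊆ Set.Iio k := fun j hj =>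
      lt_of_le_of_ne (Nat.lt_succ_iff.1 (hset hj.1)) hj.2
    obtain ⟨ψ, hclosed, hψ, hmodels⟩ := ih hemso.ex hpt hset'
    refine ⟨ψ, hclosed, hψ, fun G => (hmodels G).trans ?_⟩
    simp only [Sat, update_setVal]
    constructor
    · rintro ⟨X, hX, E, hE, hsat⟩
      exact ⟨Fin.snoc X E, Fin.lastCases (by simpa using hE) (by simpa using hX), hsat⟩
    · rintro ⟨X, hX, hsat⟩
      refine ⟨Fin.init X, fun j => hX j.castSucc, X (Fin.last k), hX _, ?_⟩
      rwa [Fin.snoc_init_self]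

theorem FODefinable.exists_emso_sentence {G : ι → LabeledGraph Vl El V}
    {P : ι → (Fin k → Set V) → Prop} (hP : FODefinable (n := 0) G fun i X _ => P i X) :
    ∃ ψ : GMSO Vl El, ψ.Closed ∧ ψ.IsEMSO ∧ ∀ i, Models (G i).dom (G i).lab (G i).edge ψ ↔
      ∃ X : Fin k → Set V, (∀ j, X j ⊆ (G i).dom) ∧ P i X := by
  obtain ⟨φ, hfo, hpt, hset, hsat⟩ := hP
  obtain ⟨ψ, hclosed, hemso, hmodels⟩ := (IsEMSO.fo hfo).exists_sentence (V := V)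
    (Set.subset_empty_iff.1 (by simpa using hpt)) hset
  refine ⟨ψ, hclosed, hemso, fun i => (hmodels (G i)).trans ?_⟩
  refine exists_congr fun X => and_congr_right fun _ => ?_
  simpa only [pointVal_zero] using hsat i X Fin.elim0 fun j => j.elim0

end Sentences

end GMSO

namespace PreCBM

variable {A : Architecture} {Alph : Type} {M : PreCBM A Alph} {e f : A.Event}

theorem procSucc_iff_of_one_lt (he : M.isEvent e) (h : 1 < e.2) :
    M.procSucc f e ↔ f = (e.1, e.2 - 1) := by
  obtain ⟨p, i⟩ := e
  obtain ⟨q, j⟩ := f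
  constructor
  · rintro ⟨-, -, hp, hi⟩
    simp_all
  · intro hf
    obtain ⟨rfl, rfl⟩ := Prod.mk.inj hf
    refine ⟨?_, he, rfl, (Nat.sub_add_cancel h.le).symm⟩
    simp only [isEvent] at *
    omega

theorem not_procSucc_of_le_one (h : e.2 ≤ 1) : ¬ M.procSucc f e := by
  rintro ⟨⟨hf, -⟩, -, -, hef⟩
  omega

theorem isEvent_length {p : A.Procs} (hp : (M.word p).length ≠ 0) :
    M.isEvent (p, (M.word p).length) :=
  ⟨Nat.one_le_iff_ne_zero.2 hp, le_rfl⟩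

theorem isEvent.length_ne_zero (he : M.isEvent e) : (M.word e.1).length ≠ 0 :=
  Nat.one_le_iff_ne_zero.1 (he.1.trans he.2)

theorem forall_not_procSucc_iff (he : M.isEvent e) :
    (∀ f ∈ M.events, ¬ M.procSucc e f) ↔ e = (e.1, (M.word e.1).length) := by
  obtain ⟨p, i⟩ := e
  constructor
  · intro hmax
    by_contra hne
    have hnext : M.isEvent (p, i + 1) := by
      simp only [isEvent, Prod.mk.injEq, true_and] at *
      omega
    exact hmax _ hnext ⟨he, hnext, rfl, rfl⟩
  · rintro hlast f ⟨-, hf⟩ ⟨-, -, hp, hi⟩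
    simp only [Prod.mk.injEq, true_and] at hlast hp hi
    rw [hp] at hf
    omega

theorem IsCBM.isInternal_iff (hM : M.IsCBM) :
    M.isInternal e ↔ ∀ d, ∀ f ∈ M.events, ¬ (M.mrel d e f ∨ M.mrel d f e) := by
  simp only [isInternal, not_exists]
  refine forall_congr' fun d => forall_congr' fun f => ⟨fun h _ => h, fun h hef => ?_⟩
  exact h (hef.elim (fun hr => (hM.mrel_valid _ _ _ hr).2.1) fun hr => (hM.mrel_valid _ _ _ hr).1)
    hef

end PreCBM

namespace CBM

open GMSO

variable {A : Architecture} {Alph : Type} {k n : ℕ}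

/-- The structure in which `MSO(A, Alph)` formulas are interpreted by `PreCBM.MsoSat`. -/
def toLabeledGraph (M : CBM A Alph) : LabeledGraph (Alph ⊕ A.Procs) (Option A.DS) A.Event :=
  ⟨M.1.events, M.1.gmsoLab, M.1.gmsoEdge⟩

theorem foDefinableMap_proc (j : Fin n) :
    FODefinableMap (k := k) toLabeledGraph fun (_ : CBM A Alph) _ v => (v j).1 :=
  fun p => .lab (Sum.inr p) j

theorem foDefinableMap_label [Finite Alph] (j : Fin n) :
    FODefinableMap (k := k) toLabeledGraph fun (M : CBM A Alph) _ v => M.1.label (v j) :=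
  .option fun a => .lab (Sum.inl a) j

theorem foDefinable_procSucc (i j : Fin n) :
    FODefinable (k := k) toLabeledGraph fun (M : CBM A Alph) _ v => M.1.procSucc (v i) (v j) :=
  .edge none i j

theorem foDefinable_mrel (d : A.DS) (i j : Fin n) :
    FODefinable (k := k) toLabeledGraph fun (M : CBM A Alph) _ v => M.1.mrel d (v i) (v j) :=
  .edge (some d) i j

theorem foDefinable_forall_not_procSucc_right (j : Fin n) :
    FODefinable (k := k) toLabeledGraph
      fun (M : CBM A Alph) _ v => ∀ f ∈ M.1.events, ¬ M.1.procSucc (v j) f :=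
  .forall_mem (foDefinable_procSucc j.castSucc (Fin.last n)).not

theorem foDefinable_forall_not_procSucc_left (j : Fin n) :
    FODefinable (k := k) toLabeledGraph
      fun (M : CBM A Alph) _ v => ∀ f ∈ M.1.events, ¬ M.1.procSucc f (v j) :=
  .forall_mem (foDefinable_procSucc (Fin.last n) j.castSucc).not

theorem foDefinable_isInternal (j : Fin n) :
    FODefinable (k := k) toLabeledGraph fun (M : CBM A Alph) _ v => M.1.isInternal (v j) := by
  refine .congr (.forall_finite fun d => .forall_mem ?_) fun M _ _ _ => M.2.isInternal_iff.symm
  exact ((foDefinable_mrel d j.castSucc (Fin.last n)).or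
    (foDefinable_mrel d (Fin.last n) j.castSucc)).not

end CBM

namespace CPDS

open GMSO CBM

variable {A : Architecture} {Alph : Type} (S : CPDS A Alph)

/-- What the transition relations see of an event: its process, the location before it, its label,
and its own location. -/
abbrev LocalView : Type := A.Procs × S.Locs × Option Alph × S.Locs

/-- The local view of the event `e` under the location assignment `ρ`. -/
def localView (M : PreCBM A Alph) (ρ : A.Event → S.Locs) (e : A.Event) : S.LocalView :=
  (e.1, S.prevLoc ρ e, M.label e, ρ e)

/-- Some internal transition of `S` explains the local view `x`. -/
def AllowsInternal (x : S.LocalView) : Prop :=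
  ∃ a, x.2.2.1 = some a ∧ S.internal x.1 x.2.1 a x.2.2.2

/-- A write and a read transition of `S` exchanging the same value through `d` explain the local
views `x` and `y` of the two ends of a matching edge. -/
def AllowsMatching (d : A.DS) (x y : S.LocalView) : Prop :=
  ∃ v a b, x.2.2.1 = some a ∧ y.2.2.1 = some b ∧
    S.write x.1 x.2.1 a d v x.2.2.2 ∧ S.read y.1 y.2.1 b d v y.2.2.2

/-- `ρ` is a run of `S` on `M` whose last locations are final. -/
def IsAcceptingRun (M : PreCBM A Alph) (ρ : A.Event → S.Locs) : Prop :=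
  S.IsRun M ρ ∧ (fun p => S.lastLoc M ρ p) ∈ S.finals

section LocationAssignments

variable {S} {M : PreCBM A Alph} {ρ ρ' : A.Event → S.Locs} {e : A.Event} {p : A.Procs} {l : S.Locs}

theorem prevLoc_eq_iff (he : M.isEvent e) :
    S.prevLoc ρ e = l ↔ (∃ f ∈ M.events, M.procSucc f e ∧ ρ f = l) ∨
      (∀ f ∈ M.events, ¬ M.procSucc f e) ∧ S.init = l := by
  by_cases hmin : e.2 ≤ 1
  · simp [prevLoc, hmin, PreCBM.not_procSucc_of_le_one hmin]
  · have hpred : ∀ f, M.procSucc f e ↔ f = (e.1, e.2 - 1) := fun f =>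
      PreCBM.procSucc_iff_of_one_lt he (not_le.1 hmin)
    have hmem : (e.1, e.2 - 1) ∈ M.events := ((hpred _).2 rfl).1
    simp [prevLoc, hmin, hpred, hmem]

theorem lastLoc_eq_iff :
    S.lastLoc M ρ p = l ↔
      (∃ e ∈ M.events, e.1 = p ∧ (∀ f ∈ M.events, ¬ M.procSucc e f) ∧ ρ e = l) ∨
      (∀ e ∈ M.events, e.1 ≠ p) ∧ S.init = l := by
  by_cases hp : (M.word p).length = 0
  · have hempty : ∀ e ∈ M.events, e.1 ≠ p := fun e he hep =>
      PreCBM.isEvent.length_ne_zero he (hep ▸ hp)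
    have hnone : ¬ ∃ e ∈ M.events, e.1 = p ∧ (∀ f ∈ M.events, ¬ M.procSucc e f) ∧ ρ e = l :=
      fun ⟨e, he, hep, _⟩ => hempty e he hep
    rw [lastLoc, if_pos hp, or_iff_right hnone, and_iff_right hempty]
  · have hlast : (p, (M.word p).length) ∈ M.events := PreCBM.isEvent_length hp
    have hsome : ¬ ((∀ e ∈ M.events, e.1 ≠ p) ∧ S.init = l) := fun h => h.1 _ hlast rfl
    rw [lastLoc, if_neg hp, or_iff_left hsome]
    constructor
    · exact fun h => ⟨_, hlast, rfl, (PreCBM.forall_not_procSucc_iff hlast).2 rfl, h⟩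
    · rintro ⟨e, he, rfl, hmax, h⟩
      rwa [← (PreCBM.forall_not_procSucc_iff he).1 hmax]

theorem prevLoc_congr (h : Set.EqOn ρ ρ' M.events) (he : M.isEvent e) :
    S.prevLoc ρ e = S.prevLoc ρ' e := by
  rw [prevLoc, prevLoc]
  split_ifs with hmin
  · rfl
  · exact h ((PreCBM.procSucc_iff_of_one_lt he (not_le.1 hmin)).2 rfl).1

theorem localView_congr (h : Set.EqOn ρ ρ' M.events) (he : M.isEvent e) :
    S.localView M ρ e = S.localView M ρ' e := by
  rw [localView, localView, prevLoc_congr h he, h he]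

theorem lastLoc_congr (h : Set.EqOn ρ ρ' M.events) : S.lastLoc M ρ p = S.lastLoc M ρ' p := by
  rw [lastLoc, lastLoc]
  split_ifs with hp
  · rfl
  · exact h (PreCBM.isEvent_length hp)

theorem isRun_iff (hM : M.IsCBM) :
    S.IsRun M ρ ↔
      (∀ e ∈ M.events, M.isInternal e → S.AllowsInternal (S.localView M ρ e)) ∧
      ∀ d, ∀ e ∈ M.events, ∀ f ∈ M.events, M.mrel d e f →
        S.AllowsMatching d (S.localView M ρ e) (S.localView M ρ f) := by
  refine and_congr_right fun _ => forall_congr' fun d => forall_congr' fun e => ?_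
  refine ⟨fun h _ f _ => h f, fun h f hef => ?_⟩
  obtain ⟨he, hf, -⟩ := hM.mrel_valid d e f hef
  exact h he f hf hef

theorem IsAcceptingRun.congr (hM : M.IsCBM) (h : Set.EqOn ρ ρ' M.events)
    (hρ : S.IsAcceptingRun M ρ) : S.IsAcceptingRun M ρ' := by
  obtain ⟨hrun, hfinal⟩ := hρ
  rw [isRun_iff hM] at hrun
  refine ⟨(isRun_iff hM).2 ⟨fun e he hint => ?_, fun d e he f hf hef => ?_⟩, ?_⟩
  · rw [← localView_congr h he]
    exact hrun.1 e he hint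
  · rw [← localView_congr h he, ← localView_congr h hf]
    exact hrun.2 d e he f hf hef
  · rwa [← funext fun p => lastLoc_congr h (p := p)]

end LocationAssignments

section Definability

variable {k n : ℕ} (dec : Set (Fin k) → S.Locs)

theorem foDefinableMap_prevLoc (j : Fin n) :
    FODefinableMap toLabeledGraph
      fun (_ : CBM A Alph) X v => S.prevLoc (coloring dec X) (v j) := by
  intro l
  refine .congr (.or (.exists_mem ?_) (.and ?_ (.const _))) fun M _ _ hv =>
    (prevLoc_eq_iff (M := M.1) (hv j)).symm
  · exact (foDefinable_procSucc (Fin.last n) j.castSucc).and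
      (FODefinableMap.coloring dec (Fin.last n) l)
  · exact foDefinable_forall_not_procSucc_left j

theorem foDefinableMap_lastLoc (p : A.Procs) :
    FODefinableMap (n := n) toLabeledGraph
      fun (M : CBM A Alph) X _ => S.lastLoc M.1 (coloring dec X) p := by
  intro l
  refine .congr (.or (.exists_mem ?_) (.and (.forall_mem ?_) (.const _))) fun _ _ _ _ =>
    lastLoc_eq_iff.symm
  · exact (foDefinableMap_proc (Fin.last n) p).and
      ((foDefinable_forall_not_procSucc_right (Fin.last n)).and
        (FODefinableMap.coloring dec (Fin.last n) l))
  · exact (foDefinableMap_proc (Fin.last n) p).not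

theorem foDefinableMap_localView [Finite Alph] (j : Fin n) :
    FODefinableMap toLabeledGraph
      fun (M : CBM A Alph) X v => S.localView M.1 (coloring dec X) (v j) :=
  (foDefinableMap_proc j).prodMk <| (S.foDefinableMap_prevLoc dec j).prodMk <|
    (foDefinableMap_label j).prodMk <| .coloring dec j

attribute [local instance] CPDS.locsFintype

theorem foDefinable_isRun [Finite Alph] :
    FODefinable (n := n) toLabeledGraph
      fun (M : CBM A Alph) X _ => S.IsRun M.1 (coloring dec X) := by
  refine .congr (.and (.forall_mem ?_) (.forall_finite fun d => .forall_mem (.forall_mem ?_)))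
    fun M _ _ _ => (isRun_iff M.2).symm
  · exact (foDefinable_isInternal _).imp ((S.foDefinableMap_localView dec _).pred S.AllowsInternal)
  · exact (foDefinable_mrel d _ _).imp
      (((S.foDefinableMap_localView dec _).prodMk (S.foDefinableMap_localView dec _)).pred
        fun xy => S.AllowsMatching d xy.1 xy.2)

theorem foDefinable_isAcceptingRun [Finite Alph] :
    FODefinable (n := n) toLabeledGraph
      fun (M : CBM A Alph) X _ => S.IsAcceptingRun M.1 (coloring dec X) :=
  (S.foDefinable_isRun dec).and
    ((FODefinableMap.pi (S.foDefinableMap_lastLoc dec)).pred (· ∈ S.finals))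

end Definability

end CPDS

/-- For every architecture `A`, finite alphabet `Alph`, and
every CPDS `S` over `(A, Alph)`, there exists an EMSO sentence `Φ_S` such that
`L(Φ_S) = L(S)`. -/
theorem cpds_to_emso (A : Architecture) (Alph : Type) [Fintype Alph]
    (S : CPDS A Alph) :
    ∃ φ : GMSO (Alph ⊕ A.Procs) (Option A.DS),
      GMSO.Closed φ ∧ GMSO.IsEMSO φ ∧ msoLang A Alph φ = S.lang := by
  have := S.locsFintype
  have := S.locsNonempty
  obtain ⟨k, dec, hdec⟩ := GMSO.exists_surjective_set_fin S.Locs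
  obtain ⟨φ, hclosed, hemso, hmodels⟩ := (S.foDefinable_isAcceptingRun dec).exists_emso_sentence
  refine ⟨φ, hclosed, hemso, Set.ext fun M => (hmodels M).trans ⟨?_, ?_⟩⟩
  · rintro ⟨X, -, hX⟩
    exact ⟨GMSO.coloring dec X, hX⟩
  · rintro ⟨ρ, hρ⟩
    obtain ⟨X, hsub, heq⟩ := GMSO.exists_coloring_eqOn hdec M.1.events ρ
    exact ⟨X, hsub, CPDS.IsAcceptingRun.congr M.2 heq.symm hρ⟩
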